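/- Let h ≥ 2 and k ≥ 6 be integers, and let A = {0 = a_0 < a_1 < ... < a_{k-1}} be a set of k integers in normal form (i.e., gcd of its elements equals 1). If |hA| = hk + 3h - 4, then A ⊆ [0, k+2], i.e., a_{k-1} ≤ k+2. -/

import Mathlib

open Finset Pointwise

/-- The `h`-fold sumset: all sums of `h` elements of `A` (with repetition). -/
def hfold : ℕ → Finset ℤ → Finset ℤ
  | 0, _ => {0}
  | n + 1, A => A + hfold n A

/-!
Let `l` be the largest element of `A`, suppose `|A| + 3 ≤ l`, and let `B` be the image of `A` in
`ZMod l`. As `nA` and `nA + l` both lie in `(n + 1)A`, each residue class of `(n + 1)A` has more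
elements there than in `nA`; hence `|(n + 1)A| ≥ |nA| + |(n + 1)B|`, and it is enough to have good
lower bounds for the sumsets of `B`. They come from Mann's theorem: unless `X + B` is everything,
`|X + B| ≥ |X| + (r - 1)|H|` for some subgroup `H`, where `r` is the number of cosets of `H` met
by `B`. As `B` generates, `r ≥ 2`; since `|B| ≤ r|H|`, this gives `|3B| ≥ min(l, 2|B|)`, which
takes care of `n ≥ 2`. For `n = 1` one gains more when `r ≥ 3`, whereas for `r = 2` the set `A`
itself splits into two fibres `S` and `T` whose sumsets `S + S`, `S + T`, `T + T` are disjoint, so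
that `|2A| ≥ 3|A| - 3`. Altogether `|hA| ≥ h(|A| + 3) - 3`.
-/

section Expansion

variable {G : Type*} [AddCommGroup G] [DecidableEq G] {B X Y : Finset G}

/-- The expansion `|X + B| - |X|` of `X` by `B`, the quantity minimised in Hamidoune's
isoperimetric method. -/
def expansion (B X : Finset G) : ℤ := #(X + B) - #X

lemma expansion_vadd (B : Finset G) (x : G) (X : Finset G) :
    expansion B (x +ᵥ X) = expansion B X := by
  simp only [expansion, vadd_add_assoc, card_vadd_finset]

lemma expansion_union_add_expansion_inter_le (B X Y : Finset G) :
    expansion B (X ∪ Y) + expansion B (X ∩ Y) ≤ expansion B X + expansion B Y := by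
  have hinter : #(X ∩ Y + B) ≤ #((X + B) ∩ (Y + B)) := card_le_card inter_add_subset
  have hsum := card_union_add_card_inter (X + B) (Y + B)
  have hcard := card_union_add_card_inter X Y
  rw [← union_add] at hsum
  simp only [expansion]
  omega

lemma card_add_eq_card_mul_ncard_image_mk {H : AddSubgroup G} (hX : (H : Set G) = X)
    (B : Finset G) :
    #(X + B) = Nat.card H * ((QuotientAddGroup.mk : G → G ⧸ H) '' B).ncard := by
  rw [← Set.ncard_coe_finset, coe_add, ← hX, add_comm, ← Nat.card_coe_set_eq,
    AddSubgroup.card_add_eq_card_addSubgroup_add_card_quotient, Nat.card_coe_set_eq]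

variable [Fintype G]

/-- A fragment of `B`: a set of least expansion among the nonempty sets `X` with `X + B ≠ G`. -/
def IsFragment (B X : Finset G) : Prop :=
  MinimalFor (fun Y ↦ Y.Nonempty ∧ Y + B ≠ univ) (expansion B) X

/-- A fragment of `B` of least cardinality (an atom, in Hamidoune's terminology). -/
def IsMinFragment (B X : Finset G) : Prop := MinimalFor (IsFragment B) card X

namespace IsFragment

lemma nonempty (hX : IsFragment B X) : X.Nonempty := hX.prop.1

lemma add_ne_univ (hX : IsFragment B X) : X + B ≠ univ := hX.prop.2

lemma expansion_le (hX : IsFragment B X) (hY : Y.Nonempty) (hYB : Y + B ≠ univ) :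
    expansion B X ≤ expansion B Y :=
  (le_total _ _).elim id (hX.le_of_le ⟨hY, hYB⟩)

lemma of_expansion_le (hX : IsFragment B X) (hY : Y.Nonempty) (hYB : Y + B ≠ univ)
    (h : expansion B Y ≤ expansion B X) : IsFragment B Y :=
  ⟨⟨hY, hYB⟩, fun _ hZ _ ↦ h.trans (hX.expansion_le hZ.1 hZ.2)⟩

lemma vadd (hX : IsFragment B X) (x : G) : IsFragment B (x +ᵥ X) := by
  refine hX.of_expansion_le hX.nonempty.vadd_finset (fun h ↦ hX.add_ne_univ ?_)
    (expansion_vadd B x X).le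
  rw [vadd_add_assoc, ← vadd_finset_univ (a := x)] at h
  exact AddAction.injective x h

lemma neg_compl_add (hX : IsFragment B X) : IsFragment B (-(X + B)ᶜ) := by
  have hsub : -(X + B)ᶜ + B ⊆ (-X)ᶜ := by
    intro z hz
    obtain ⟨y, hy, b, hb, rfl⟩ := mem_add.1 hz
    simp only [mem_neg', mem_compl] at hy ⊢
    exact fun hx ↦ hy (mem_add.2 ⟨_, hx, b, hb, by abel⟩)
  have hcompl : -(X + B)ᶜ + B ≠ univ := by
    intro h
    rw [h, univ_subset_iff, compl_eq_univ_iff, neg_eq_empty] at hsub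
    exact hX.nonempty.ne_empty hsub
  refine hX.of_expansion_le ?_ hcompl ?_
  · simpa [nonempty_iff_ne_empty] using hX.add_ne_univ
  · have hcard := card_le_card hsub
    have hXcard := card_le_univ X
    have hXBcard := card_le_univ (X + B)
    rw [card_compl, card_neg] at hcard
    rw [expansion, expansion, card_neg, card_compl]
    omega

end IsFragment

lemma exists_isMinFragment (hB : B ≠ univ) : ∃ X, IsMinFragment B X := by
  have hfragment := (Set.toFinite {Y : Finset G | Y.Nonempty ∧ Y + B ≠ univ}).exists_minimalFor
    (expansion B) _ ⟨0, by simpa using hB⟩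
  exact exists_minimalFor_of_wellFoundedLT (IsFragment B) card hfragment

namespace IsMinFragment

lemma isFragment (hX : IsMinFragment B X) : IsFragment B X := hX.prop

lemma card_le (hX : IsMinFragment B X) (hY : IsFragment B Y) : #X ≤ #Y :=
  (le_total _ _).elim id (hX.le_of_le hY)

lemma vadd (hX : IsMinFragment B X) (x : G) : IsMinFragment B (x +ᵥ X) :=
  ⟨hX.isFragment.vadd x, fun _ hY _ ↦ (card_vadd_finset x X).trans_le (hX.card_le hY)⟩

lemma card_add_card_add_le (hX : IsMinFragment B X) : #X + #(X + B) ≤ Fintype.card G := by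
  have h := hX.card_le hX.isFragment.neg_compl_add
  have hcard := card_le_univ (X + B)
  rw [card_neg, card_compl] at h
  omega

lemma eq_of_inter_nonempty (hX : IsMinFragment B X) (hY : IsMinFragment B Y)
    (hXY : (X ∩ Y).Nonempty) : X = Y := by
  have hsub := expansion_union_add_expansion_inter_le B X Y
  have hinter : X ∩ Y + B ≠ univ := fun h ↦ hX.isFragment.add_ne_univ
    (univ_subset_iff.1 (h ▸ add_subset_add_right inter_subset_left))
  have hXinter := hX.isFragment.expansion_le hXY hinter
  have hYX := hY.isFragment.expansion_le hX.isFragment.nonempty hX.isFragment.add_ne_univ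
  have hunion : X ∪ Y + B ≠ univ := by
    intro h
    have hpos := hXY.card_pos
    have hle := hX.card_add_card_add_le
    have hcard := card_union_add_card_inter X Y
    have hYcard := hY.card_le hX.isFragment
    have huniv : #(X ∪ Y + B) = Fintype.card G := by rw [h, card_univ]
    simp only [expansion] at hsub hXinter hYX
    omega
  have hXunion := hX.isFragment.expansion_le (hXY.mono inter_subset_union) hunion
  have hfrag : IsFragment B (X ∩ Y) := hX.isFragment.of_expansion_le hXY hinter (by omega)
  exact (eq_of_subset_of_card_le inter_subset_left (hX.card_le hfrag)).symm.trans
    (eq_of_subset_of_card_le inter_subset_right (hY.card_le hfrag))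

lemma exists_coe_addSubgroup_eq (hX : IsMinFragment B X) (h0 : 0 ∈ X) :
    ∃ H : AddSubgroup G, (H : Set G) = X := by
  refine ⟨AddAction.stabilizer G X, Set.ext fun x ↦ ⟨fun hx ↦ ?_, fun hx ↦ ?_⟩⟩
  · have hmem : x +ᵥ (0 : G) ∈ x +ᵥ X := vadd_mem_vadd_finset h0
    rwa [AddAction.mem_stabilizer_iff.1 hx, vadd_eq_add, add_zero] at hmem
  · exact (hX.vadd x).eq_of_inter_nonempty hX
      ⟨x, mem_inter.2 ⟨mem_vadd_finset.2 ⟨0, h0, add_zero x⟩, hx⟩⟩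

end IsMinFragment

/-- Mann's theorem. Hamidoune's proof: a translate of a minimal fragment is a subgroup. -/
theorem exists_addSubgroup_card_add_mul_ncard_le (hB : B ≠ univ) :
    ∃ H : AddSubgroup G, (QuotientAddGroup.mk : G → G ⧸ H) '' B ≠ Set.univ ∧
      ∀ X : Finset G, X.Nonempty → X + B ≠ univ →
        #X + Nat.card H * ((QuotientAddGroup.mk : G → G ⧸ H) '' B).ncard ≤
          #(X + B) + Nat.card H := by
  obtain ⟨F, hF⟩ := exists_isMinFragment hB
  obtain ⟨x, hx⟩ := hF.isFragment.nonempty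
  replace hF := hF.vadd (-x)
  obtain ⟨H, hH⟩ := hF.exists_coe_addSubgroup_eq (mem_vadd_finset.2 ⟨x, hx, neg_add_cancel x⟩)
  refine ⟨H, fun h ↦ hF.isFragment.add_ne_univ ?_, fun X hX hXB ↦ ?_⟩
  · rw [← coe_eq_univ, coe_add, ← hH, add_comm, ← QuotientAddGroup.preimage_image_mk_eq_add, h,
      Set.preimage_univ]
  · have hle := hF.isFragment.expansion_le hX hXB
    have hcard : Nat.card H = #(-x +ᵥ F) := by
      rw [← Set.ncard_coe_finset, ← hH, ← Nat.card_coe_set_eq]; rfl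
    rw [expansion, expansion, card_add_eq_card_mul_ncard_image_mk hH, ← hcard] at hle
    omega

end Expansion

section Generating

open AddSubgroup

lemma one_lt_ncard_of_closure_eq_top {G : Type*} [AddGroup G] {S : Set G}
    (hfin : S.Finite) (h0 : 0 ∈ S) (hgen : closure S = ⊤) (hS : S ≠ Set.univ) : 1 < S.ncard := by
  by_contra! hcard
  have hzero : S = {0} :=
    Set.eq_singleton_iff_unique_mem.2
      ⟨h0, fun x hx ↦ (Set.ncard_le_one_iff hfin).1 hcard hx h0⟩
  rw [hzero, closure_singleton_zero] at hgen
  rw [hzero, ← coe_bot, hgen, coe_top] at hS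
  exact hS rfl

lemma add_self_ne_zero_of_closure_pair_eq_top {G : Type*} [AddGroup G] {c : G}
    (hgen : closure {0, c} = ⊤) (hc : ({0, c} : Set G) ≠ Set.univ) : c + c ≠ 0 := by
  intro hcc
  refine hc (Set.eq_univ_of_forall fun x ↦ ?_)
  have hx : x ∈ closure {0, c} := hgen ▸ mem_top x
  rw [closure_insert_zero, mem_closure_singleton] at hx
  obtain ⟨n, rfl⟩ := hx
  obtain ⟨m, rfl | rfl⟩ := n.even_or_odd'
  · left
    rw [mul_comm, mul_zsmul, two_zsmul, hcc, zsmul_zero]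
  · right
    rw [add_zsmul, mul_comm, mul_zsmul, two_zsmul, hcc, zsmul_zero, zero_add, one_zsmul]
    rfl

variable {G : Type*} [AddCommGroup G] {B X : Finset G}

lemma closure_image_mk_eq_top {S : Set G} (hgen : closure S = ⊤) (H : AddSubgroup G) :
    closure ((QuotientAddGroup.mk : G → G ⧸ H) '' S) = ⊤ := by
  rw [← QuotientAddGroup.coe_mk', ← AddMonoidHom.map_closure, hgen,
    map_top_of_surjective _ (QuotientAddGroup.mk'_surjective H)]

lemma card_le_card_mul_ncard_image_mk [Finite G] (H : AddSubgroup G) (B : Finset G) :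
    #B ≤ Nat.card H * ((QuotientAddGroup.mk : G → G ⧸ H) '' B).ncard := by
  rw [← Set.ncard_coe_finset, ← Nat.card_coe_set_eq (_ '' _),
    ← AddSubgroup.card_add_eq_card_addSubgroup_add_card_quotient, Nat.card_coe_set_eq]
  exact Set.ncard_le_ncard fun b hb ↦ Set.mem_add.2 ⟨b, hb, 0, H.zero_mem, add_zero b⟩

variable [Fintype G] [DecidableEq G]

lemma exists_addSubgroup_one_lt_ncard_image_mk (h0 : 0 ∈ B) (hgen : closure (B : Set G) = ⊤)
    (hX : X.Nonempty) (hXB : X + B ≠ univ) :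
    ∃ H : AddSubgroup G, (QuotientAddGroup.mk : G → G ⧸ H) '' B ≠ Set.univ ∧
      1 < ((QuotientAddGroup.mk : G → G ⧸ H) '' B).ncard ∧
      #X + Nat.card H * ((QuotientAddGroup.mk : G → G ⧸ H) '' B).ncard ≤
        #(X + B) + Nat.card H := by
  have hB : B ≠ univ := by
    rintro rfl
    obtain ⟨x, hx⟩ := hX
    exact hXB (eq_univ_of_forall fun y ↦ mem_add.2 ⟨x, hx, y - x, mem_univ _, add_sub_cancel x y⟩)
  obtain ⟨H, hHB, hle⟩ := exists_addSubgroup_card_add_mul_ncard_le hB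
  exact ⟨H, hHB, one_lt_ncard_of_closure_eq_top (Set.toFinite _) ⟨0, h0, rfl⟩
    (closure_image_mk_eq_top hgen H) hHB, hle X hX hXB⟩

/-- A theorem of Olson. -/
lemma two_mul_card_add_card_le_two_mul_card_add (h0 : 0 ∈ B) (hgen : closure (B : Set G) = ⊤)
    (hX : X.Nonempty) (hXB : X + B ≠ univ) : 2 * #X + #B ≤ 2 * #(X + B) := by
  obtain ⟨H, -, hcosets, hle⟩ := exists_addSubgroup_one_lt_ncard_image_mk h0 hgen hX hXB
  have hB := card_le_card_mul_ncard_image_mk H B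
  nlinarith

lemma min_card_two_mul_card_le_card_three_nsmul (h0 : 0 ∈ B) (hgen : closure (B : Set G) = ⊤) :
    min (Fintype.card G) (2 * #B) ≤ #(3 • B) := by
  have hne : B.Nonempty := ⟨0, h0⟩
  rw [succ_nsmul, two_nsmul]
  by_cases hthree : B + B + B = univ
  · rw [hthree, card_univ]
    exact min_le_left _ _
  · have htwo : B + B ≠ univ := fun h ↦ hthree (by rw [h, univ_add_of_zero_mem h0])
    have hle₂ := two_mul_card_add_card_le_two_mul_card_add h0 hgen hne htwo
    have hle₃ := two_mul_card_add_card_le_two_mul_card_add h0 hgen (hne.add hne) hthree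
    omega

lemma exists_image_mk_eq_pair_or_card_add_le (h0 : 0 ∈ B) (hgen : closure (B : Set G) = ⊤)
    (hX : X.Nonempty) (hXB : X + B ≠ univ) :
    (∃ (H : AddSubgroup G) (c : G ⧸ H), (QuotientAddGroup.mk : G → G ⧸ H) '' B = {0, c} ∧
      c + c ≠ 0) ∨ 3 * #X + 2 * #B ≤ 3 * #(X + B) := by
  obtain ⟨H, hHB, hcosets, hle⟩ := exists_addSubgroup_one_lt_ncard_image_mk h0 hgen hX hXB
  obtain htwo | hthree := eq_or_lt_of_le (Nat.succ_le_of_lt hcosets)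
  · obtain ⟨c, hpair⟩ : ∃ c, (QuotientAddGroup.mk : G → G ⧸ H) '' B = {0, c} := by
      obtain ⟨x, y, -, hxy⟩ := Set.ncard_eq_two.1 htwo.symm
      have hzero : (0 : G ⧸ H) ∈ ({x, y} : Set (G ⧸ H)) := hxy ▸ ⟨0, h0, rfl⟩
      obtain rfl | rfl := hzero
      exacts [⟨y, hxy⟩, ⟨x, hxy.trans (Set.pair_comm x 0)⟩]
    have hc := add_self_ne_zero_of_closure_pair_eq_top
      (hpair ▸ closure_image_mk_eq_top hgen H) (hpair ▸ hHB)
    exact .inl ⟨H, c, hpair, hc⟩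
  · have hB := card_le_card_mul_ncard_image_mk H B
    right
    nlinarith

end Generating

lemma card_add_card_image_le_of_add_mem {M N : Type*} [AddZeroClass M] [LinearOrder M]
    [AddLeftStrictMono M] [DecidableEq N] {l : M} (hl : 0 < l) {f : M → N}
    (hf : ∀ m, f (m + l) = f m) {S T : Finset M} (hST : S ⊆ T) (hshift : ∀ s ∈ S, s + l ∈ T) :
    #S + #(T.image f) ≤ #T := by
  -- The largest element of a fibre of `f` on `T` is not in `S`, as its translate by `l` is larger.
  have hsub : T.image f ⊆ (T \ S).image f := by
    intro r hr
    have hfibre : (T.filter (f · = r)).Nonempty := by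
      simpa [Finset.Nonempty] using hr
    obtain ⟨t, ht, hmax⟩ := exists_max_image _ id hfibre
    rw [mem_filter] at ht
    refine mem_image.2 ⟨t, mem_sdiff.2 ⟨ht.1, fun htS ↦ ?_⟩, ht.2⟩
    have hle := hmax (t + l) (mem_filter.2 ⟨hshift t htS, (hf t).trans ht.2⟩)
    exact (lt_add_of_pos_right t hl).not_ge hle
  have hle := (card_le_card hsub).trans card_image_le
  have hcard := card_sdiff_add_card_eq_card hST
  omega

section Fibres

variable {M N : Type*} {S T : Finset M} {x y : N}

lemma disjoint_of_forall_map_eq {f : M → N} (hS : ∀ s ∈ S, f s = x) (hT : ∀ t ∈ T, f t = y)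
    (hxy : x ≠ y) : Disjoint S T :=
  disjoint_left.2 fun a haS haT ↦ hxy ((hS a haS).symm.trans (hT a haT))

lemma map_eq_add_of_mem_add [AddZeroClass M] [AddZeroClass N] [DecidableEq M] {f : M →+ N}
    (hS : ∀ s ∈ S, f s = x) (hT : ∀ t ∈ T, f t = y) : ∀ a ∈ S + T, f a = x + y := by
  intro a ha
  obtain ⟨s, hs, t, ht, rfl⟩ := mem_add.1 ha
  rw [map_add, hS s hs, hT t ht]

variable [AddCommMonoid M] [LinearOrder M] [IsOrderedCancelAddMonoid M] [AddCancelCommMonoid N]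
  {f : M →+ N} {A : Finset M}

lemma three_mul_card_add_card_le_card_add_self (hS : S.Nonempty) (hT : T.Nonempty) (hSA : S ⊆ A)
    (hTA : T ⊆ A) (hSx : ∀ s ∈ S, f s = x) (hTy : ∀ t ∈ T, f t = y) (hxy : x ≠ y)
    (hadd : x + x ≠ y + y) : 3 * (#S + #T) ≤ #(A + A) + 3 := by
  have hSS := cauchy_davenport_add_of_linearOrder_isCancelAdd hS hS
  have hST := cauchy_davenport_add_of_linearOrder_isCancelAdd hS hT
  have hTT := cauchy_davenport_add_of_linearOrder_isCancelAdd hT hT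
  have hdisj : Disjoint (S + S) (S + T) :=
    disjoint_of_forall_map_eq (map_eq_add_of_mem_add hSx hSx) (map_eq_add_of_mem_add hSx hTy)
      (add_right_injective x |>.ne hxy)
  have hdisj' : Disjoint (S + S ∪ (S + T)) (T + T) := disjoint_union_left.2
    ⟨disjoint_of_forall_map_eq (map_eq_add_of_mem_add hSx hSx) (map_eq_add_of_mem_add hTy hTy)
      hadd,
    disjoint_of_forall_map_eq (map_eq_add_of_mem_add hSx hTy) (map_eq_add_of_mem_add hTy hTy)
      (add_left_injective y |>.ne hxy)⟩
  have hsub : S + S ∪ (S + T) ∪ (T + T) ⊆ A + A := union_subset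
    (union_subset (add_subset_add hSA hSA) (add_subset_add hSA hTA)) (add_subset_add hTA hTA)
  have hcard := card_le_card hsub
  rw [card_union_of_disjoint hdisj', card_union_of_disjoint hdisj] at hcard
  omega

lemma three_mul_card_le_card_add_self_of_image_eq_pair (hA : f '' A = {x, y}) (hxy : x ≠ y)
    (hadd : x + x ≠ y + y) : 3 * #A ≤ #(A + A) + 3 := by
  classical
  have hy : ∀ a ∈ A.filter (f · ≠ x), f a = y := fun a ha ↦
    (hA.subset ⟨a, (mem_filter.1 ha).1, rfl⟩).resolve_left (mem_filter.1 ha).2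
  obtain ⟨s, hs, hsx⟩ := hA.superset (Set.mem_insert x {y})
  obtain ⟨t, ht, hty⟩ := hA.superset (Set.mem_insert_of_mem x rfl)
  rw [← card_filter_add_card_filter_not (f · = x)]
  exact three_mul_card_add_card_le_card_add_self ⟨s, mem_filter.2 ⟨hs, hsx⟩⟩
    ⟨t, mem_filter.2 ⟨ht, hty.trans_ne hxy.symm⟩⟩ (filter_subset _ A) (filter_subset _ A)
    (fun a ha ↦ (mem_filter.1 ha).2) hy hxy hadd

end Fibres

section Residues

variable {A : Finset ℤ} {l : ℕ}

lemma closure_eq_top_of_gcd_eq_one (hgcd : A.gcd id = 1) :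
    AddSubgroup.closure (A : Set ℤ) = ⊤ := by
  obtain ⟨g, hg⟩ := A.gcd_eq_sum_mul id
  have hone : (1 : ℤ) ∈ AddSubgroup.closure (A : Set ℤ) := by
    rw [← hgcd, hg]
    refine sum_mem fun a ha ↦ ?_
    rw [id, mul_comm, ← smul_eq_mul]
    exact zsmul_mem (AddSubgroup.subset_closure ha) _
  rw [eq_top_iff, ← Int.addSubgroupClosure_one, AddSubgroup.closure_le, Set.singleton_subset_iff]
  exact hone

lemma closure_image_intCast_eq_top (l : ℕ) (hgen : AddSubgroup.closure (A : Set ℤ) = ⊤) :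
    AddSubgroup.closure (A.image (Int.cast : ℤ → ZMod l) : Set (ZMod l)) = ⊤ := by
  have hmap := AddMonoidHom.map_closure (Int.castAddHom (ZMod l)) A
  rw [hgen, AddSubgroup.map_top_of_surjective _ ZMod.intCast_surjective] at hmap
  rw [coe_image]
  exact hmap.symm

lemma card_le_card_image_intCast_add_one (hA : A ⊆ Icc 0 (l : ℤ)) :
    #A ≤ #(A.image (Int.cast : ℤ → ZMod l)) + 1 := by
  have hinj : Set.InjOn (Int.cast : ℤ → ZMod l) (A.erase l) := by
    intro x hx y hy hxy
    have hIco : ∀ z ∈ A.erase (l : ℤ), 0 ≤ z ∧ z < l := fun z hz ↦ by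
      obtain ⟨hzl, hzA⟩ := mem_erase.1 hz
      obtain ⟨hz0, hle⟩ := mem_Icc.1 (hA hzA)
      exact ⟨hz0, lt_of_le_of_ne hle hzl⟩
    rwa [ZMod.intCast_eq_intCast_iff', Int.emod_eq_of_lt (hIco x hx).1 (hIco x hx).2,
      Int.emod_eq_of_lt (hIco y hy).1 (hIco y hy).2] at hxy
  rw [← tsub_le_iff_right]
  calc #A - 1 ≤ #(A.erase l) := pred_card_le_card_erase
    _ = #((A.erase l).image (Int.cast : ℤ → ZMod l)) := (card_image_of_injOn hinj).symm
    _ ≤ _ := card_le_card (image_subset_image (erase_subset _ A))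

lemma card_nsmul_add_card_nsmul_image_intCast_le (hl : 0 < l) (h0 : 0 ∈ A) (hlA : (l : ℤ) ∈ A)
    (n : ℕ) :
    #(n • A) + #((n + 1) • A.image (Int.cast : ℤ → ZMod l)) ≤ #((n + 1) • A) := by
  have himage := image_nsmul (Int.castAddHom (ZMod l)) A (n + 1)
  simp only [Int.coe_castAddHom] at himage
  rw [← himage]
  refine card_add_card_image_le_of_add_mem (l := (l : ℤ)) (by exact_mod_cast hl) (by simp)
    (nsmul_subset_nsmul_right h0 n.le_succ) fun s hs ↦ ?_
  rw [succ_nsmul]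
  exact add_mem_add hs hlA

theorem two_mul_card_add_three_le_card_two_nsmul (hA : A ⊆ Icc 0 (l : ℤ)) (h0 : 0 ∈ A)
    (hlA : (l : ℤ) ∈ A) (hgen : AddSubgroup.closure (A : Set ℤ) = ⊤) (hcard : 6 ≤ #A)
    (hl : #A + 3 ≤ l) : 2 * #A + 3 ≤ #(2 • A) := by
  have : NeZero l := ⟨by omega⟩
  have hBcard := card_le_card_image_intCast_add_one hA
  have hlift := card_nsmul_add_card_nsmul_image_intCast_le (by omega) h0 hlA 1
  rw [one_nsmul, one_add_one_eq_two, two_nsmul, two_nsmul] at hlift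
  rw [two_nsmul]
  set B := A.image (Int.cast : ℤ → ZMod l) with hB
  have hB0 : 0 ∈ B := mem_image.2 ⟨0, h0, Int.cast_zero⟩
  by_cases hBB : B + B = univ
  · rw [hBB, card_univ, ZMod.card] at hlift
    omega
  obtain ⟨H, c, hpair, hcc⟩ | hgrowth := exists_image_mk_eq_pair_or_card_add_le hB0
    (closure_image_intCast_eq_top l hgen) ⟨0, hB0⟩ hBB
  · have hfibres := three_mul_card_le_card_add_self_of_image_eq_pair (A := A)
      (f := (QuotientAddGroup.mk' H).comp (Int.castAddHom (ZMod l))) (x := 0) (y := c)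
      (by rw [hB, coe_image, Set.image_image] at hpair; exact hpair)
      (by rintro rfl; exact hcc (add_zero 0)) (by simpa using hcc.symm)
    omega
  · omega

theorem mul_card_add_three_le_card_nsmul_add_three (hA : A ⊆ Icc 0 (l : ℤ)) (h0 : 0 ∈ A)
    (hlA : (l : ℤ) ∈ A) (hgen : AddSubgroup.closure (A : Set ℤ) = ⊤) (hcard : 6 ≤ #A)
    (hl : #A + 3 ≤ l) :
    ∀ h : ℕ, h * (#A + 3) ≤ #(h • A) + 3
  | 0 => by simp
  | 1 => by simp
  | 2 => by
    have htwo := two_mul_card_add_three_le_card_two_nsmul hA h0 hlA hgen hcard hl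
    omega
  | n + 3 => by
    have : NeZero l := ⟨by omega⟩
    have ih := mul_card_add_three_le_card_nsmul_add_three hA h0 hlA hgen hcard hl (n + 2)
    have hBcard := card_le_card_image_intCast_add_one hA
    set B := A.image (Int.cast : ℤ → ZMod l)
    have hlift : #((n + 2) • A) + #((n + 3) • B) ≤ #((n + 3) • A) :=
      card_nsmul_add_card_nsmul_image_intCast_le (by omega) h0 hlA (n + 2)
    have hB0 : 0 ∈ B := mem_image.2 ⟨0, h0, Int.cast_zero⟩
    have hthree := min_card_two_mul_card_le_card_three_nsmul hB0
      (closure_image_intCast_eq_top l hgen)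
    have hmono := card_le_card (nsmul_subset_nsmul_right hB0 (show 3 ≤ n + 3 by omega))
    rw [ZMod.card] at hthree
    have hmul : (n + 3) * (#A + 3) = (n + 2) * (#A + 3) + (#A + 3) := by ring
    omega

end Residues

lemma hfold_eq_nsmul (h : ℕ) (A : Finset ℤ) : hfold h A = h • A := by
  induction h with
  | zero => rw [zero_nsmul]; rfl
  | succ n ih => rw [hfold, ih, succ_nsmul']

theorem stmt0_general {h : ℕ} {A : Finset ℤ} (hcard : 6 ≤ #A) (h0 : 0 ∈ A)
    (hnn : ∀ a ∈ A, 0 ≤ a) (hgcd : A.gcd id = 1) (hsum : #(hfold h A) + 4 ≤ h * (#A + 3)) :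
    ∀ a ∈ A, a ≤ #A + 2 := by
  obtain ⟨m, hmA, hmax⟩ := exists_max_image A id ⟨0, h0⟩
  obtain ⟨l, rfl⟩ := Int.eq_ofNat_of_zero_le (hnn m hmA)
  have hl : l ≤ #A + 2 := by
    by_contra! hlt
    have hle := mul_card_add_three_le_card_nsmul_add_three
      (fun a ha ↦ mem_Icc.2 ⟨hnn a ha, hmax a ha⟩) h0 hmA (closure_eq_top_of_gcd_eq_one hgcd)
      hcard hlt h
    rw [← hfold_eq_nsmul] at hle
    omega
  intro a ha
  have hle : a ≤ l := hmax a ha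
  exact hle.trans (by exact_mod_cast hl)

theorem stmt0 (h k : ℕ) (hh : 2 ≤ h) (hk : 6 ≤ k) (A : Finset ℤ)
    (hcard : A.card = k) (h0 : (0 : ℤ) ∈ A) (hnn : ∀ a ∈ A, 0 ≤ a)
    (hgcd : A.gcd id = 1)
    (hsum : (hfold h A).card = h * k + 3 * h - 4) :
    ∀ a ∈ A, a ≤ (k : ℤ) + 2 := by
  subst hcard
  exact stmt0_general hk h0 hnn hgcd (by rw [hsum, mul_add]; omega)
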